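/- Let n, p, q ∈ ℂ, set a = n/2, and let b ∈ ℂ be any root of n·b² + 3p·b + n² + 2q − (3/2)·n² = 0. Let z₁, z₂, z₃, z₄ be the roots with multiplicity of X⁴ + nX² + pX + q over ℂ. Then the polynomial T(Y) = ∏ᵢ₌₁⁴ (Y + zᵢ² + b·zᵢ + a) has zero coefficient of Y³ and zero coefficient of Y². -/

import Mathlib

open Polynomial

/-!
By Vieta's formulas the second and third coefficients of the transform are the elementary symmetric
functions `e₁` and `e₂` of the numbers `wᵢ = zᵢ² + b zᵢ + a`. Both are polynomials in `a`, `b` and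
`e₁, …, e₄` of the roots, that is, in the coefficients of the original polynomial. When the latter
has no second term, `e₁(w) = 0` is a linear equation in `a` alone, and once it holds, `e₂(w) = 0`
is the quadratic equation for `b`.
-/

section Esymm

variable {R : Type*} [CommSemiring R]

theorem esymm_zero_eq_one (s : Multiset R) : s.esymm 0 = 1 := by
  simp [Multiset.esymm, Multiset.powersetCard_zero_left]

theorem esymm_succ_zero (k : ℕ) : (0 : Multiset R).esymm (k + 1) = 0 := by
  simp [Multiset.esymm, Multiset.powersetCard_zero_right]

theorem esymm_succ_cons (z : R) (s : Multiset R) (k : ℕ) :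
    (z ::ₘ s).esymm (k + 1) = s.esymm (k + 1) + z * s.esymm k := by
  simp [Multiset.esymm, Multiset.powersetCard_cons, Multiset.sum_map_mul_left]

theorem esymm_one_eq_sum (s : Multiset R) : s.esymm 1 = s.sum := by
  simp [Multiset.esymm, Multiset.powersetCard_one]

theorem esymm_one_map_add_right (s : Multiset R) (a : R) :
    (s.map (· + a)).esymm 1 = s.esymm 1 + s.card * a := by
  simp [esymm_one_eq_sum, Multiset.sum_map_add]

end Esymm

section EsymmMap

variable {R : Type*} [CommRing R]

-- The right-hand side uses `e₁` of the translate, not of `s`, so that only the last correction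
-- survives when that `e₁` vanishes, without a division by `2`.
theorem esymm_two_map_add_right (s : Multiset R) (a : R) :
    (s.map (· + a)).esymm 2 =
      s.esymm 2 + (s.card - 1) * a * (s.map (· + a)).esymm 1 - s.card.choose 2 * a ^ 2 := by
  induction s using Multiset.induction_on with
  | empty => simp [esymm_succ_zero]
  | cons z s ih =>
    have hchoose : (s.card + 1).choose 2 = s.card + s.card.choose 2 := by
      simp [Nat.choose_succ_succ']
    simp only [Multiset.map_cons, Multiset.card_cons, esymm_succ_cons, esymm_zero_eq_one, ih,
      esymm_one_map_add_right, zero_add, hchoose]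
    push_cast
    ring

theorem esymm_one_map_sq_add_mul (s : Multiset R) (b : R) :
    (s.map fun z ↦ z ^ 2 + b * z).esymm 1 = s.esymm 1 ^ 2 - 2 * s.esymm 2 + b * s.esymm 1 := by
  induction s using Multiset.induction_on with
  | empty => simp [esymm_succ_zero]
  | cons z s ih =>
    simp only [Multiset.map_cons, esymm_succ_cons, esymm_zero_eq_one, ih]
    ring

theorem esymm_two_map_sq_add_mul (s : Multiset R) (b : R) :
    (s.map fun z ↦ z ^ 2 + b * z).esymm 2 =
      s.esymm 2 ^ 2 - 2 * s.esymm 1 * s.esymm 3 + 2 * s.esymm 4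
        + b * (s.esymm 1 * s.esymm 2 - 3 * s.esymm 3) + b ^ 2 * s.esymm 2 := by
  induction s using Multiset.induction_on with
  | empty => simp [esymm_succ_zero]
  | cons z s ih =>
    simp only [Multiset.map_cons, esymm_succ_cons, esymm_zero_eq_one, ih,
      esymm_one_map_sq_add_mul]
    ring

end EsymmMap

/-- The Tschirnhaus transform of `∏ (X - z)`, `z ∈ s`, by the quadratic subsidiary equation
`z² + b z + a + y = 0`. It is a function of the multiset `s` of roots rather than of the polynomial,
so that it makes sense over every commutative semiring. -/
noncomputable def tschirnhausTransform {R : Type*} [CommSemiring R] (s : Multiset R) (b a : R) :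
    R[X] :=
  (s.map fun z ↦ X + C (z ^ 2 + b * z + a)).prod

theorem coeff_tschirnhausTransform {R : Type*} [CommSemiring R] (s : Multiset R) (b a : R) {k : ℕ}
    (hk : k ≤ s.card) :
    (tschirnhausTransform s b a).coeff k =
      ((s.map fun z ↦ z ^ 2 + b * z).map (· + a)).esymm (s.card - k) := by
  rw [tschirnhausTransform, Multiset.prod_X_add_C_coeff' s _ hk, Multiset.map_map]
  rfl

-- For `d = 0` and `a = n / 2` the last term of `hb` is `6 * (n / 2) ^ 2 = 3 / 2 * n ^ 2`.
theorem bring_quartic_remove_second_third_general {R : Type*} [CommRing R] {d : ℕ}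
    (s : Multiset R) (hs : s.card = d + 4) {f : R[X]} (hf : (s.map fun z ↦ X - C z).prod = f)
    (hdepressed : f.coeff (d + 3) = 0) (a b : R) (ha : (d + 4) * a = 2 * f.coeff (d + 2))
    (hb : f.coeff (d + 2) * b ^ 2 + 3 * f.coeff (d + 1) * b + f.coeff (d + 2) ^ 2
      + 2 * f.coeff d - (d + 4).choose 2 * a ^ 2 = 0) :
    (tschirnhausTransform s b a).coeff (d + 3) = 0 ∧
      (tschirnhausTransform s b a).coeff (d + 2) = 0 := by
  have vieta (j : ℕ) (hj : j ≤ 4) : f.coeff (d + (4 - j)) = (-1) ^ j * s.esymm j := by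
    rw [← hf, Multiset.prod_X_sub_C_coeff s (by omega), hs, show d + 4 - (d + (4 - j)) = j by omega]
  have h₁ : s.esymm 1 = 0 := by simpa [hdepressed] using (vieta 1 (by simp)).symm
  have h₂ : f.coeff (d + 2) = s.esymm 2 := by simpa using vieta 2 (by simp)
  have h₃ : f.coeff (d + 1) = -s.esymm 3 := by simpa [pow_succ] using vieta 3 (by simp)
  have h₄ : f.coeff d = s.esymm 4 := by simpa [pow_succ] using vieta 4 le_rfl
  have hsecond : ((s.map fun z ↦ z ^ 2 + b * z).map (· + a)).esymm 1 = 0 := by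
    rw [esymm_one_map_add_right, esymm_one_map_sq_add_mul, Multiset.card_map, hs, h₁]
    push_cast
    linear_combination ha + 2 * h₂
  have hthird : ((s.map fun z ↦ z ^ 2 + b * z).map (· + a)).esymm 2 = 0 := by
    rw [esymm_two_map_add_right, hsecond, esymm_two_map_sq_add_mul, Multiset.card_map, hs, h₁]
    rw [h₂, h₃, h₄] at hb
    linear_combination hb
  constructor
  · rwa [coeff_tschirnhausTransform s b a (by omega), show s.card - (d + 3) = 1 by omega]
  · rwa [coeff_tschirnhausTransform s b a (by omega), show s.card - (d + 2) = 2 by omega]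

/-- Bring §VII: for the quartic `X⁴ + nX² + pX + q`, with `a = n/2` and `b`
any root of `nb² + 3pb + n² + 2q - (3/2)n² = 0`, the quadratic Tschirnhaus
transform `T(Y) = ∏ᵢ (Y + zᵢ² + b·zᵢ + a)` loses its second and third
terms (the coefficients of `Y³` and `Y²` vanish). -/
theorem bring_quartic_remove_second_third (n p q : ℂ) (a : ℂ) (ha : a = n / 2)
    (b : ℂ)
    (hb : n * b ^ 2 + 3 * p * b + n ^ 2 + 2 * q - 3 / 2 * n ^ 2 = 0)
    (z₁ z₂ z₃ z₄ : ℂ)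
    (hroots : (X ^ 4 + C n * X ^ 2 + C p * X + C q).roots = {z₁, z₂, z₃, z₄}) :
    ((X + C (z₁ ^ 2 + b * z₁ + a)) * (X + C (z₂ ^ 2 + b * z₂ + a)) *
        (X + C (z₃ ^ 2 + b * z₃ + a)) * (X + C (z₄ ^ 2 + b * z₄ + a))).coeff 3 = 0 ∧
    ((X + C (z₁ ^ 2 + b * z₁ + a)) * (X + C (z₂ ^ 2 + b * z₂ + a)) *
        (X + C (z₃ ^ 2 + b * z₃ + a)) * (X + C (z₄ ^ 2 + b * z₄ + a))).coeff 2 = 0 := by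
  have hfactor := prod_multiset_X_sub_C_of_monic_of_roots_card_eq
    (p := X ^ 4 + C n * X ^ 2 + C p * X + C q) (by monicity!)
    (by rw [hroots, show natDegree _ = 4 by compute_degree!]; rfl)
  rw [hroots] at hfactor
  have ha' : 4 * a = 2 * n := by rw [ha]; ring
  have hb' : n * b ^ 2 + 3 * p * b + n ^ 2 + 2 * q - 6 * a ^ 2 = 0 := by
    rw [ha]; linear_combination hb
  have hcoeff := bring_quartic_remove_second_third_general (d := 0) {z₁, z₂, z₃, z₄} rfl hfactor
    (by simp) a b (by simpa using ha')
    (by simpa [coeff_X, Nat.choose] using hb')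
  simpa [tschirnhausTransform, mul_assoc] using hcoeff
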